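/- Let r = 13 and let G_7 ≤ GL(2, F_13) be the subgroup generated by [[2,0],[0,2]], [[2,0],[0,3]], [[0,-1],[1,0]], [[1,1],[-1,1]]. Then every orbit of S(G_7) = G_7 ∩ SL(2, F_13) acting on F_13^2 \ {(0,0)} has cardinality 24. In particular, S(G_7) fixes no 1-dimensional subspace of F_13^2. -/

import Mathlib

/-!
A matrix `M` of determinant one fixing a nonzero vector satisfies `(M - 1) ^ 2 = 0`, hence
`M ^ n = 1 + n (M - 1)`. A finite group `H` of such matrices whose order is nonzero in the base
ring therefore acts freely on the nonzero vectors: every orbit has `|H|` elements, and a nonzero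
invariant submodule has more than `|H|` elements.

For `H = S(G_7)`, identify the matrix ring over `𝔽₁₃` with the quaternion algebra. Modulo scalars,
`G_7` is generated by Hurwitz units and `D = diag(2, 3)`, which normalises them. Since `det D = 6`
is not a square modulo 13, an element of `G_7` of determinant one involves an even power of `D`,
and `D ^ 2` is a Hurwitz unit up to a scalar. So `S(G_7)` is the group of the 24 Hurwitz units.
-/

open Matrix MulAction
open Matrix.GeneralLinearGroup (scalar)
open Matrix.SpecialLinearGroup (toGL)
open Subgroup (center normalizer zpowers)
open scoped MatrixGroups

section FreeAction

theorem one_add_pow_of_sq_eq_zero {A : Type*} [Ring A] {x : A} (hx : x ^ 2 = 0) (n : ℕ) :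
    (1 + x) ^ n = 1 + n • x := by
  induction n with
  | zero => simp
  | succ n ih =>
    calc (1 + x) ^ (n + 1) = (1 + n • x) * (1 + x) := by rw [pow_succ, ih]
      _ = 1 + (n + 1) • x + n • x ^ 2 := by
        rw [mul_one_add, add_mul, one_mul, smul_mul_assoc, ← sq]
        module
      _ = 1 + (n + 1) • x := by rw [hx, smul_zero, add_zero]

theorem sq_eq_zero_of_trace_eq_zero_of_det_eq_zero {R : Type*} [CommRing R] [Nontrivial R]
    {N : Matrix (Fin 2) (Fin 2) R} (htrace : N.trace = 0) (hdet : N.det = 0) : N ^ 2 = 0 := by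
  have hcayley := N.aeval_self_charpoly
  rwa [charpoly_fin_two, htrace, hdet, map_zero, zero_mul, sub_zero, add_zero, map_pow,
    Polynomial.aeval_X] at hcayley

variable {R : Type*} [CommRing R] [IsDomain R]

theorem sub_one_sq_eq_zero_of_mulVec_eq_self {M : Matrix (Fin 2) (Fin 2) R} (hdet : M.det = 1)
    {v : Fin 2 → R} (hv : v ≠ 0) (hfix : M *ᵥ v = v) : (M - 1) ^ 2 = 0 := by
  have hsub : (M - 1).det = 0 :=
    exists_mulVec_eq_zero_iff.1 ⟨v, hv, by rw [sub_mulVec, one_mulVec, hfix, sub_self]⟩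
  have hexpand : (M - 1).det = M.det - (M - 1).trace - 1 := by
    simp only [det_fin_two, trace_fin_two, Matrix.sub_apply, one_apply, reduceIte, Fin.reduceEq]
    ring
  have htrace : (M - 1).trace = 0 := by linear_combination hdet - hsub + hexpand
  exact sq_eq_zero_of_trace_eq_zero_of_det_eq_zero htrace hsub

theorem eq_one_of_mulVec_eq_self {M : Matrix (Fin 2) (Fin 2) R} (hdet : M.det = 1)
    {n : ℕ} (hn : (n : R) ≠ 0) (hpow : M ^ n = 1) {v : Fin 2 → R} (hv : v ≠ 0)
    (hfix : M *ᵥ v = v) : M = 1 := by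
  have hunip := one_add_pow_of_sq_eq_zero (sub_one_sq_eq_zero_of_mulVec_eq_self hdet hv hfix) n
  rw [add_sub_cancel, hpow, left_eq_add, ← Nat.cast_smul_eq_nsmul R] at hunip
  exact sub_eq_zero.1 ((smul_eq_zero.1 hunip).resolve_left hn)

variable {H : Subgroup SL(2, R)}

theorem stabilizer_eq_bot_of_card_ne_zero (hH : (Nat.card H : R) ≠ 0) {v : Fin 2 → R}
    (hv : v ≠ 0) : stabilizer H v = ⊥ := by
  refine (Subgroup.eq_bot_iff_forall _).2 fun g hg ↦ ?_
  have hpow : (g : SL(2, R)).1 ^ Nat.card H = 1 :=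
    congrArg (fun h : H ↦ (h : SL(2, R)).1) (pow_card_eq_one' (x := g))
  exact Subtype.ext (Subtype.ext (eq_one_of_mulVec_eq_self g.1.2 hH hpow hv hg))

theorem ncard_orbit_eq_card_of_card_ne_zero (hH : (Nat.card H : R) ≠ 0) {v : Fin 2 → R}
    (hv : v ≠ 0) : (orbit H v).ncard = Nat.card H := by
  rw [← index_stabilizer, stabilizer_eq_bot_of_card_ne_zero hH hv, Subgroup.index_bot]

theorem card_lt_card_of_smul_mem (hH : (Nat.card H : R) ≠ 0) {L : Submodule R (Fin 2 → R)}
    [Finite L] (hL : L ≠ ⊥) (hinv : ∀ g ∈ H, ∀ v ∈ L, g • v ∈ L) : Nat.card H < Nat.card L := by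
  obtain ⟨v, hvL, hv⟩ := L.exists_mem_ne_zero_of_ne_bot hL
  have hzero : (0 : Fin 2 → R) ∉ orbit H v := by
    rintro ⟨g, hg⟩
    exact hv ((smul_eq_zero_iff_eq g).1 hg)
  have hsub : orbit H v ⊂ (L : Set (Fin 2 → R)) := by
    refine (Set.ssubset_iff_of_subset ?_).2 ⟨0, L.zero_mem, hzero⟩
    rintro _ ⟨g, rfl⟩
    exact hinv g g.2 v hvL
  rw [← ncard_orbit_eq_card_of_card_ne_zero hH hv]
  exact Set.ncard_lt_ncard hsub (Set.toFinite _)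

end FreeAction

section SpecialPart

variable {n R : Type*} [Fintype n] [DecidableEq n] [CommRing R]

/-- The group `S(G) = G ∩ SL(n, R)`, encoded as a subgroup of `SL(n, R)` so that Mathlib's action
of `SL(n, R)` on column vectors applies to it. -/
def specialPart (G : Subgroup (GL n R)) : Subgroup (SpecialLinearGroup n R) :=
  G.comap toGL

theorem orbit_specialPart (G : Subgroup (GL n R)) (v : n → R) :
    orbit (specialPart G) v = {w | ∃ g ∈ G, g.val.det = 1 ∧ g.val *ᵥ v = w} := by
  ext w
  constructor
  · rintro ⟨s, rfl⟩
    exact ⟨toGL s, s.2, s.1.2, rfl⟩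
  · rintro ⟨g, hg, hdet, rfl⟩
    have hg' : toGL ⟨g.val, hdet⟩ = g := Units.ext rfl
    exact ⟨⟨⟨g.val, hdet⟩, Subgroup.mem_comap.2 (hg'.symm ▸ hg)⟩, rfl⟩

theorem even_of_isSquare_zpow {A : Type*} [CommGroup A] {a : A} (ha : ¬ IsSquare a) {k : ℤ}
    (h : IsSquare (a ^ k)) : Even k := by
  by_contra hk
  obtain ⟨m, rfl⟩ := Int.not_even_iff_odd.1 hk
  have hm : IsSquare (a ^ (2 * m)) := (even_two_mul m).isSquare_zpow a
  rw [_root_.zpow_add_one] at h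
  exact ha (by simpa using h.div hm)

theorem isSquare_det_of_mem_center {c : GL (Fin 2) R} (hc : c ∈ center (GL (Fin 2) R)) :
    IsSquare (GeneralLinearGroup.det c) := by
  rw [GeneralLinearGroup.center_eq_range_scalar] at hc
  obtain ⟨u, rfl⟩ := hc
  exact ⟨u, by rw [GeneralLinearGroup.det_scalar, Fintype.card_fin, sq]⟩

theorem even_of_toGL_eq_mul_zpow_mul {c d : GL (Fin 2) R} (hc : c ∈ center (GL (Fin 2) R))
    (hd : ¬ IsSquare (GeneralLinearGroup.det d)) {k : ℤ} {s t : SL(2, R)}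
    (h : toGL s = c * d ^ k * toGL t) : Even k := by
  have hdet : GeneralLinearGroup.det c * GeneralLinearGroup.det d ^ k = 1 := by
    simpa using (congrArg GeneralLinearGroup.det h).symm
  refine even_of_isSquare_zpow hd ?_
  rw [eq_inv_of_mul_eq_one_right hdet]
  exact (isSquare_det_of_mem_center hc).inv

theorem eq_one_or_eq_neg_one_of_mem_center [IsDomain R] {s : SL(2, R)}
    (hs : s ∈ center SL(2, R)) : s = 1 ∨ s = -1 := by
  obtain ⟨r, hr, hrs⟩ := Matrix.SpecialLinearGroup.mem_center_iff.1 hs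
  rw [Fintype.card_fin, sq_eq_one_iff] at hr
  rcases hr with rfl | rfl
  · exact .inl (Subtype.ext (by rw [← hrs, map_one]; rfl))
  · exact .inr (Subtype.ext (by rw [← hrs, map_neg, map_one]; rfl))

end SpecialPart

section BinaryTetrahedral

/-- The quaternion unit `i` in the splitting of the quaternions over `𝔽₁₃`. -/
def quatI : SL(2, ZMod 13) := ⟨!![0, -1; 1, 0], by decide⟩

/-- The quaternion unit `j` in the splitting of the quaternions over `𝔽₁₃`; here `5 ^ 2 = -1`. -/
def quatJ : SL(2, ZMod 13) := ⟨!![5, 0; 0, -5], by decide⟩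

/-- The Hurwitz unit `ω = (1 + i + j + ij) / 2`, up to sign an element of order three. -/
def quatOmega : SL(2, ZMod 13) := ⟨!![3, 2; 3, 11], by decide⟩

/-- The Hurwitz unit with normal form `i ^ a * j ^ b * ω ^ c`, where `p = (a, b, c)`. -/
def hurwitzUnit (p : Fin 4 × Fin 2 × Fin 3) : SL(2, ZMod 13) :=
  quatI ^ (p.1 : ℕ) * quatJ ^ (p.2.1 : ℕ) * quatOmega ^ (p.2.2 : ℕ)

theorem hurwitzUnit_injective : Function.Injective hurwitzUnit := by
  unfold Function.Injective
  decide +kernel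

theorem hurwitzUnit_mul_mem_range (p q : Fin 4 × Fin 2 × Fin 3) :
    hurwitzUnit p * hurwitzUnit q ∈ Set.range hurwitzUnit := by
  revert p q
  decide +kernel

theorem inv_hurwitzUnit_mem_range (p : Fin 4 × Fin 2 × Fin 3) :
    (hurwitzUnit p)⁻¹ ∈ Set.range hurwitzUnit := by
  revert p
  decide +kernel

/-- The binary tetrahedral group, i.e. the group of the 24 Hurwitz units, inside `SL(2, 𝔽₁₃)`. -/
def binaryTetrahedral : Subgroup SL(2, ZMod 13) where
  carrier := Set.range hurwitzUnit
  one_mem' := ⟨0, by simp [hurwitzUnit]⟩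
  mul_mem' := by
    rintro _ _ ⟨p, rfl⟩ ⟨q, rfl⟩
    exact hurwitzUnit_mul_mem_range p q
  inv_mem' := by
    rintro _ ⟨p, rfl⟩
    exact inv_hurwitzUnit_mem_range p

theorem card_binaryTetrahedral : Nat.card binaryTetrahedral = 24 :=
  (Set.ncard_range_of_injective hurwitzUnit_injective).trans (by simp)

theorem quatI_mem_binaryTetrahedral : quatI ∈ binaryTetrahedral :=
  ⟨(1, 0, 0), by simp [hurwitzUnit]⟩

theorem quatJ_mem_binaryTetrahedral : quatJ ∈ binaryTetrahedral :=
  ⟨(0, 1, 0), by simp [hurwitzUnit]⟩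

theorem quatOmega_mem_binaryTetrahedral : quatOmega ∈ binaryTetrahedral :=
  ⟨(0, 0, 1), by simp [hurwitzUnit]⟩

theorem neg_one_mem_binaryTetrahedral : -1 ∈ binaryTetrahedral := ⟨(2, 0, 0), by decide +kernel⟩

theorem binaryTetrahedral_le {K : Subgroup SL(2, ZMod 13)} (hi : quatI ∈ K) (hj : quatJ ∈ K)
    (hω : quatOmega ∈ K) : binaryTetrahedral ≤ K := by
  rintro _ ⟨p, rfl⟩
  exact mul_mem (mul_mem (pow_mem hi _) (pow_mem hj _)) (pow_mem hω _)

end BinaryTetrahedral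

section ZywinaGroup

/-- The scalar matrix `2`, the first of Zywina's generators. -/
def scalarTwo : GL (Fin 2) (ZMod 13) := scalar (Fin 2) ⟨2, 7, by decide, by decide⟩

/-- The generator `diag(2, 3)`. Modulo scalars it is `1 + j`, so it acts on the Hurwitz units by
conjugation, and its square is `j` up to a scalar. -/
def diagTwoThree : GL (Fin 2) (ZMod 13) :=
  ⟨!![2, 0; 0, 3], !![7, 0; 0, 9], by decide, by decide⟩

/-- The generator `1 - i`, of norm `2`. -/
def oneSubI : GL (Fin 2) (ZMod 13) :=
  ⟨!![1, 1; -1, 1], !![7, -7; 7, 7], by decide, by decide⟩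

/-- Zywina's exceptional mod-13 image group `G_7`. -/
def zywinaGroup : Subgroup (GL (Fin 2) (ZMod 13)) :=
  Subgroup.closure {scalarTwo, diagTwoThree, toGL quatI, oneSubI}

theorem zywinaGroup_eq_closure_val : zywinaGroup =
    Subgroup.closure {g : GL (Fin 2) (ZMod 13) |
    g.val = !![2, 0; 0, 2] ∨ g.val = !![2, 0; 0, 3] ∨ g.val = !![0, -1; 1, 0] ∨
      g.val = !![1, 1; -1, 1]} := by
  have hscalar : scalarTwo.val = !![2, 0; 0, 2] := by decide +kernel
  refine congrArg Subgroup.closure (Set.ext fun g ↦ ?_)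
  simp only [Set.mem_insert_iff, Set.mem_singleton_iff, Set.mem_ofPred_eq, Units.ext_iff, hscalar]
  rfl

theorem scalarTwo_mem_center : scalarTwo ∈ center (GL (Fin 2) (ZMod 13)) := by
  rw [GeneralLinearGroup.center_eq_range_scalar]
  exact ⟨_, rfl⟩

theorem diagTwoThree_sq : diagTwoThree ^ 2 = scalarTwo ^ 5 * toGL quatJ := by
  decide +kernel

theorem oneSubI_mul_quatI_mul_diagTwoThree :
    oneSubI * toGL quatI * diagTwoThree = scalarTwo ^ 9 * toGL quatOmega := by
  decide +kernel

theorem not_isSquare_det_diagTwoThree :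
    ¬ IsSquare (GeneralLinearGroup.det diagTwoThree) := by
  decide +kernel

theorem binaryTetrahedral_le_specialPart : binaryTetrahedral ≤ specialPart zywinaGroup := by
  have hz : scalarTwo ∈ zywinaGroup := Subgroup.subset_closure (by simp)
  have hd : diagTwoThree ∈ zywinaGroup := Subgroup.subset_closure (by simp)
  have hi : toGL quatI ∈ zywinaGroup := Subgroup.subset_closure (by simp)
  have hx : oneSubI ∈ zywinaGroup := Subgroup.subset_closure (by simp)
  refine binaryTetrahedral_le hi ?_ ?_
  · exact (Subgroup.mul_mem_cancel_left _ (pow_mem hz 5)).1 (diagTwoThree_sq ▸ pow_mem hd 2)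
  · exact (Subgroup.mul_mem_cancel_left _ (pow_mem hz 9)).1
      (oneSubI_mul_quatI_mul_diagTwoThree ▸ mul_mem (mul_mem hx hi) hd)

theorem diagTwoThree_mem_normalizer : diagTwoThree ∈
    normalizer ((binaryTetrahedral.map toGL : Subgroup _) : Set (GL (Fin 2) (ZMod 13))) := by
  have hconj : ∀ p, ∃ q, diagTwoThree * toGL (hurwitzUnit p) * diagTwoThree⁻¹ =
      toGL (hurwitzUnit q) := by decide +kernel
  refine Subgroup.mem_normalizer_fintype ?_
  rintro _ ⟨_, ⟨p, rfl⟩, rfl⟩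
  obtain ⟨q, hq⟩ := hconj p
  exact ⟨hurwitzUnit q, ⟨q, rfl⟩, hq.symm⟩

theorem zywinaGroup_le :
    zywinaGroup ≤ center _ ⊔ zpowers diagTwoThree ⊔ binaryTetrahedral.map toGL := by
  set K := center _ ⊔ zpowers diagTwoThree ⊔ binaryTetrahedral.map toGL
  have hz : scalarTwo ∈ K := Subgroup.mem_sup_left (Subgroup.mem_sup_left scalarTwo_mem_center)
  have hd : diagTwoThree ∈ K :=
    Subgroup.mem_sup_left (Subgroup.mem_sup_right (Subgroup.mem_zpowers _))
  have hT {t} (ht : t ∈ binaryTetrahedral) : toGL t ∈ K :=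
    Subgroup.mem_sup_right (Subgroup.mem_map_of_mem _ ht)
  have hx : oneSubI ∈ K := by
    rw [← Subgroup.mul_mem_cancel_right K (hT quatI_mem_binaryTetrahedral),
      ← Subgroup.mul_mem_cancel_right K hd, oneSubI_mul_quatI_mul_diagTwoThree]
    exact mul_mem (pow_mem hz 9) (hT quatOmega_mem_binaryTetrahedral)
  rw [zywinaGroup, Subgroup.closure_le]
  rintro g (rfl | rfl | rfl | rfl)
  exacts [hz, hd, hT quatI_mem_binaryTetrahedral, hx]

theorem exists_eq_mul_of_mem_zywinaGroup {g : GL (Fin 2) (ZMod 13)} (hg : g ∈ zywinaGroup) :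
    ∃ c ∈ center (GL (Fin 2) (ZMod 13)), ∃ n : ℤ, ∃ t ∈ binaryTetrahedral,
      g = c * diagTwoThree ^ n * toGL t := by
  have hnorm : center _ ⊔ zpowers diagTwoThree ≤
      normalizer ((binaryTetrahedral.map toGL : Subgroup _) : Set (GL (Fin 2) (ZMod 13))) :=
    sup_le (Subgroup.center_le_normalizer _) (Subgroup.zpowers_le.2 diagTwoThree_mem_normalizer)
  have hg' := zywinaGroup_le hg
  rw [← SetLike.mem_coe, Subgroup.coe_mul_of_left_le_normalizer_right _ _ hnorm] at hg'
  obtain ⟨a, ha, _, ⟨t, ht, rfl⟩, rfl⟩ := hg'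
  obtain ⟨c, hc, _, ⟨n, rfl⟩, rfl⟩ := Subgroup.mem_sup_of_normal_left.1 ha
  exact ⟨c, hc, n, t, ht, rfl⟩

theorem specialPart_zywinaGroup_le : specialPart zywinaGroup ≤ binaryTetrahedral := by
  have : Fact (Nat.Prime 13) := ⟨by norm_num⟩
  intro s hs
  obtain ⟨c, hc, n, t, ht, hst⟩ := exists_eq_mul_of_mem_zywinaGroup hs
  obtain ⟨k, rfl⟩ := (even_of_toGL_eq_mul_zpow_mul hc not_isSquare_det_diagTwoThree hst).two_dvd
  have hz : scalarTwo ^ 5 ∈ center _ := pow_mem scalarTwo_mem_center 5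
  have ht' : quatJ ^ k * t ∈ binaryTetrahedral :=
    mul_mem (zpow_mem quatJ_mem_binaryTetrahedral k) ht
  have hcentral : toGL (s / (quatJ ^ k * t)) = c * (scalarTwo ^ 5) ^ k := by
    have hcomm : Commute (scalarTwo ^ 5) (toGL quatJ) := (Subgroup.mem_center_iff.1 hz _).symm
    rw [map_div, div_eq_iff_eq_mul, hst, _root_.zpow_mul, zpow_ofNat, diagTwoThree_sq,
      hcomm.mul_zpow, map_mul, map_zpow]
    simp only [mul_assoc]
  have hmem : s / (quatJ ^ k * t) ∈ center SL(2, ZMod 13) := by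
    rw [← SpecialLinearGroup.toGL_mem_center_iff, hcentral]
    exact mul_mem hc (zpow_mem hz k)
  rw [← div_mul_cancel s (quatJ ^ k * t)]
  refine mul_mem ?_ ht'
  rcases eq_one_or_eq_neg_one_of_mem_center hmem with h | h
  · exact h ▸ one_mem _
  · exact h ▸ neg_one_mem_binaryTetrahedral

theorem specialPart_zywinaGroup : specialPart zywinaGroup = binaryTetrahedral :=
  le_antisymm specialPart_zywinaGroup_le binaryTetrahedral_le_specialPart

theorem card_specialPart_zywinaGroup : Nat.card (specialPart zywinaGroup) = 24 := by
  rw [specialPart_zywinaGroup, card_binaryTetrahedral]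

theorem card_specialPart_zywinaGroup_ne_zero :
    (Nat.card (specialPart zywinaGroup) : ZMod 13) ≠ 0 := by
  rw [card_specialPart_zywinaGroup]
  decide

end ZywinaGroup

theorem stmt_14
    (G : Subgroup (Matrix.GeneralLinearGroup (Fin 2) (ZMod 13)))
    (hG : G = Subgroup.closure
      {g : Matrix.GeneralLinearGroup (Fin 2) (ZMod 13) |
        (g : Matrix (Fin 2) (Fin 2) (ZMod 13)) = !![2, 0; 0, 2] ∨
        (g : Matrix (Fin 2) (Fin 2) (ZMod 13)) = !![2, 0; 0, 3] ∨
        (g : Matrix (Fin 2) (Fin 2) (ZMod 13)) = !![0, -1; 1, 0] ∨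
        (g : Matrix (Fin 2) (Fin 2) (ZMod 13)) = !![1, 1; -1, 1]}) :
    (∀ v : Fin 2 → ZMod 13, v ≠ 0 →
      Set.ncard {w : Fin 2 → ZMod 13 |
        ∃ g ∈ G, (g : Matrix (Fin 2) (Fin 2) (ZMod 13)).det = 1 ∧
          (g : Matrix (Fin 2) (Fin 2) (ZMod 13)).mulVec v = w} = 24) ∧
    ¬ ∃ L : Submodule (ZMod 13) (Fin 2 → ZMod 13),
      Module.finrank (ZMod 13) L = 1 ∧
      ∀ g ∈ G, (g : Matrix (Fin 2) (Fin 2) (ZMod 13)).det = 1 →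
        Submodule.map (g : Matrix (Fin 2) (Fin 2) (ZMod 13)).mulVecLin L = L := by
  have : Fact (Nat.Prime 13) := ⟨by norm_num⟩
  rw [← zywinaGroup_eq_closure_val] at hG
  subst hG
  have hne := card_specialPart_zywinaGroup_ne_zero
  refine ⟨fun v hv ↦ ?_, ?_⟩
  · rw [← orbit_specialPart, ncard_orbit_eq_card_of_card_ne_zero hne hv,
      card_specialPart_zywinaGroup]
  · rintro ⟨L, hL, hfix⟩
    have hbot : L ≠ ⊥ := by
      rintro rfl
      simp at hL
    have hlt : Nat.card (specialPart zywinaGroup) < Nat.card L :=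
      card_lt_card_of_smul_mem hne hbot fun s hs v hv ↦
        (hfix _ hs s.2).le (Submodule.mem_map_of_mem hv)
    rw [card_specialPart_zywinaGroup, Module.natCard_eq_pow_finrank (K := ZMod 13), hL,
      Nat.card_zmod] at hlt
    omega
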